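/- arXiv:1810.01126 — 5 statements merged into one kernel-verified Lean document; each statement's English description precedes it below -/
import Mathlib

section
/- There exists a constant C with 0 < C < 1 such that for every h > 0 and every four times continuously differentiable function u : ℝ → ℝ whose fourth derivative is bounded, the cubic B-spline quasi-interpolant Q₃u on the uniform grid {jh : j ∈ ℤ}, defined by Q₃u(x) = Σ_{k∈ℤ} (1/6)(−u((k−1)h) + 8u(kh) − u((k+1)h)) · B₃((x − (k−2)h)/h), satisfies sup_{x∈ℝ} |u(x) − Q₃u(x)| ≤ C · h⁴ · sup_{x∈ℝ} |u⁗(x)|. -/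
open MeasureTheory

/-- The cardinal B-spline of degree `d`: `B₀` is the indicator function of `[0,1)` and
`B_{d+1} = B_d * B₀` (convolution), so `B_d` is supported on `[0, d+1]`. -/
noncomputable def cardB : ℕ → ℝ → ℝ
  | 0 => Set.indicator (Set.Ico (0 : ℝ) 1) 1
  | (d + 1) => fun x => ∫ t : ℝ, cardB d (x - t) * cardB 0 t

/-- The cubic B-spline quasi-interpolant of `u` on the uniform grid `{jh : j ∈ ℤ}`. -/
noncomputable def Q3 (h : ℝ) (u : ℝ → ℝ) (x : ℝ) : ℝ :=
  ∑' k : ℤ, (1 / 6 : ℝ) * (-(u (((k : ℝ) - 1) * h)) + 8 * u ((k : ℝ) * h)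
      - u (((k : ℝ) + 1) * h)) * cardB 3 ((x - ((k : ℝ) - 2) * h) / h)

/-!
Rescaling reduces the claim to `h = 1`. Put `t = k - x` and weight the integers `k` by
`B₃(x + 2 - k)`. The weights are nonnegative, have total mass `1`, vanishing first and third
moments, second moment `1/3`, and fourth moment `1/3 - s²(1 - s)²` with `s` the fractional part
of `x`. The coefficient functional sends `1, t, t², t³` to `1, t, t² - 1/3, t³ - t`, so the first
four moments say that `Q₃` reproduces cubic polynomials. Hence the error at `x` is minus the
quasi-interpolant of the cubic Taylor remainder of `u` at `x`. That remainder is at most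
`M t⁴ / 24`, so its coefficient is at most `M (10 t⁴ + 12 t² + 2) / 144`, and the second and fourth
moments bound the error by `M (10/3 + 12/3 + 2) / 144 = 7 M / 108`.
-/

open Finset
open scoped fwdDiff Nat

section CardinalBSpline

theorem cardB_succ_eq_intervalIntegral (d : ℕ) (x : ℝ) :
    cardB (d + 1) x = ∫ y in (x - 1)..x, cardB d y := by
  have integrand_eq (t : ℝ) : cardB d (x - t) * cardB 0 t =
      (Set.Ico (0 : ℝ) 1).indicator (fun t ↦ cardB d (x - t)) t := by
    by_cases ht : t ∈ Set.Ico (0 : ℝ) 1 <;> simp [cardB, ht]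
  calc cardB (d + 1) x = ∫ t in Set.Ico (0 : ℝ) 1, cardB d (x - t) := by
        rw [cardB, ← integral_indicator measurableSet_Ico]
        exact integral_congr_ae (.of_forall integrand_eq)
    _ = ∫ t in (0 : ℝ)..1, cardB d (x - t) := by
        rw [integral_Ico_eq_integral_Ioc, intervalIntegral.integral_of_le zero_le_one]
    _ = ∫ y in (x - 1)..x, cardB d y := by
        rw [intervalIntegral.integral_comp_sub_left, sub_zero]

theorem cardB_nonneg (d : ℕ) (x : ℝ) : 0 ≤ cardB d x := by
  induction d generalizing x with
  | zero =>
    rw [cardB]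
    exact Set.indicator_nonneg (fun _ _ ↦ zero_le_one' ℝ) x
  | succ d ih =>
    rw [cardB_succ_eq_intervalIntegral]
    exact intervalIntegral.integral_nonneg_of_forall (by linarith) ih

theorem cardB_eq_zero_of_neg (d : ℕ) {x : ℝ} (hx : x < 0) : cardB d x = 0 := by
  induction d generalizing x with
  | zero => simp [cardB, hx]
  | succ d ih =>
    rw [cardB_succ_eq_intervalIntegral]
    refine intervalIntegral.integral_zero_ae (.of_forall fun y hy ↦ ih ?_)
    rw [Set.uIoc_of_le (by linarith)] at hy
    linarith [hy.2]

theorem cardB_eq_zero_of_ge (d : ℕ) {x : ℝ} (hx : (d : ℝ) + 1 ≤ x) : cardB d x = 0 := by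
  induction d generalizing x with
  | zero => simp_all [cardB]
  | succ d ih =>
    rw [cardB_succ_eq_intervalIntegral]
    refine intervalIntegral.integral_zero_ae (.of_forall fun y hy ↦ ih ?_)
    rw [Set.uIoc_of_le (by linarith)] at hy
    push_cast at hx
    linarith [hy.1]

theorem hasSum_mul_cardB (d : ℕ) (f : ℤ → ℝ) (x : ℝ) :
    HasSum (fun k : ℤ ↦ f k * cardB d (x - k))
      (∑ m ∈ range (d + 1), f (⌊x⌋ - m) * cardB d (Int.fract x + m)) := by
  let node (m : ℕ) : ℤ := ⌊x⌋ - m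
  have node_injective : Function.Injective node := fun m n hmn ↦ by simpa [node] using hmn
  have sub_node (m : ℕ) : x - node m = Int.fract x + m := by
    simp only [node, Int.fract]; push_cast; ring
  have term_eq_zero_of_notMem (k : ℤ) (hk : k ∉ Set.range node) : f k * cardB d (x - k) = 0 := by
    have floor_lt : ⌊x⌋ < k := by
      by_contra! hle
      exact hk ⟨(⌊x⌋ - k).toNat, by simp only [node]; omega⟩
    rw [cardB_eq_zero_of_neg d (sub_neg.2 (Int.floor_lt.1 floor_lt)), mul_zero]
  rw [← node_injective.hasSum_iff term_eq_zero_of_notMem]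
  simp only [Function.comp_def, sub_node]
  refine hasSum_sum_of_ne_finset_zero fun m hm ↦ ?_
  have hdm : ((d + 1 : ℕ) : ℝ) ≤ m := by exact_mod_cast not_lt.1 (mt mem_range.2 hm)
  push_cast at hdm
  rw [cardB_eq_zero_of_ge d (by linarith [Int.fract_nonneg x]), mul_zero]

end CardinalBSpline

section TruncatedPower

/-- The normalised truncated power `x₊ⁿ / n!`. The indicator makes `x₊⁰` the right-continuous
Heaviside function, so that the iterated-difference formula for `cardB d` also holds at `d = 0`. -/
noncomputable def truncPow (n : ℕ) : ℝ → ℝ :=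
  (Set.Ici 0).indicator fun x ↦ x ^ n / n !

theorem truncPow_of_nonneg (n : ℕ) {x : ℝ} (hx : 0 ≤ x) : truncPow n x = x ^ n / n ! :=
  Set.indicator_of_mem (Set.mem_Ici.2 hx) _

theorem truncPow_of_neg (n : ℕ) {x : ℝ} (hx : x < 0) : truncPow n x = 0 :=
  Set.indicator_of_notMem (Set.notMem_Ici.2 hx) _

theorem intervalIntegrable_truncPow (n : ℕ) (a b : ℝ) :
    IntervalIntegrable (truncPow n) volume a b :=
  have integrable_pow : LocallyIntegrable (fun x : ℝ ↦ x ^ n / n !) :=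
    Continuous.locallyIntegrable (by fun_prop)
  (integrable_pow.indicator measurableSet_Ici).integrableOn_isCompact isCompact_uIcc
    |>.intervalIntegrable

theorem integral_zero_truncPow (n : ℕ) (x : ℝ) :
    ∫ y in 0..x, truncPow n y = truncPow (n + 1) x := by
  rcases le_or_gt 0 x with hx | hx
  · have eqOn : Set.EqOn (truncPow n) (fun y ↦ y ^ n / n !) (Set.uIcc 0 x) := fun y hy ↦
      truncPow_of_nonneg n (Set.uIcc_of_le hx ▸ hy).1
    rw [intervalIntegral.integral_congr eqOn, intervalIntegral.integral_div, integral_pow,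
      truncPow_of_nonneg _ hx, Nat.factorial_succ]
    rw [zero_pow n.succ_ne_zero]
    push_cast
    field_simp
    ring
  · have eqOn : Set.EqOn (truncPow n) (fun _ ↦ 0) (Set.uIoo 0 x) := fun y hy ↦
      truncPow_of_neg n (Set.uIoo_of_ge hx.le ▸ hy).2
    rw [intervalIntegral.integral_congr_uIoo eqOn, intervalIntegral.integral_zero,
      truncPow_of_neg _ hx]

theorem integral_truncPow (n : ℕ) (a b : ℝ) :
    ∫ y in a..b, truncPow n y = truncPow (n + 1) b - truncPow (n + 1) a := by
  rw [← integral_zero_truncPow, ← integral_zero_truncPow,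
    intervalIntegral.integral_interval_sub_left] <;> exact intervalIntegrable_truncPow n _ _

theorem integral_fwdDiff_iterate {E : Type*} [NormedAddCommGroup E] [NormedSpace ℝ E]
    {f F : ℝ → E} (hf : ∀ a b, IntervalIntegrable f volume a b)
    (hF : ∀ a b, ∫ y in a..b, f y = F b - F a) (h : ℝ) (n : ℕ) (a b : ℝ) :
    ∫ y in a..b, Δ_[h] ^[n] f y = Δ_[h] ^[n] F b - Δ_[h] ^[n] F a := by
  induction n generalizing f F with
  | zero => exact hF a b
  | succ _ ih =>
    have shift_integrable (a b : ℝ) : IntervalIntegrable (fun y ↦ f (y + h)) volume a b := by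
      simpa using (hf (a + h) (b + h)).comp_add_right h
    refine ih (fun a b ↦ (shift_integrable a b).sub (hf a b)) fun a b ↦ ?_
    simp only [fwdDiff]
    rw [intervalIntegral.integral_sub (shift_integrable a b) (hf a b),
      intervalIntegral.integral_comp_add_right, hF, hF]
    abel

theorem cardB_eq_fwdDiff_iterate (d : ℕ) (x : ℝ) :
    cardB d x = (-1) ^ (d + 1) * Δ_[-1] ^[d + 1] (truncPow d) x := by
  induction d generalizing x with
  | zero =>
    rcases lt_or_ge x 0 with h0 | h0
    · simp [fwdDiff, truncPow, cardB, h0, show x < 1 by linarith]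
    · rcases lt_or_ge x 1 with h1 | h1 <;> simp [fwdDiff, truncPow, cardB, h0, h1]
  | succ d ih =>
    simp only [cardB_succ_eq_intervalIntegral, ih, intervalIntegral.integral_const_mul]
    rw [integral_fwdDiff_iterate (intervalIntegrable_truncPow d) (integral_truncPow d),
      Function.iterate_succ_apply' _ (d + 1), fwdDiff]
    ring_nf

theorem cardB_eq_sum_truncPow (d : ℕ) (x : ℝ) :
    cardB d x = ∑ j ∈ range (d + 2), (-1) ^ j * ((d + 1).choose j : ℝ) * truncPow d (x - j) := by
  rw [cardB_eq_fwdDiff_iterate, fwdDiff_iter_eq_sum_shift, mul_sum]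
  refine sum_congr rfl fun j hj ↦ ?_
  have sign_eq : (-1 : ℝ) ^ (d + 1) * (-1) ^ (d + 1 - j) = (-1) ^ j := by
    rw [← pow_add, show d + 1 + (d + 1 - j) = 2 * (d + 1 - j) + j by grind, pow_add, pow_mul]
    simp
  simp only [zsmul_eq_mul, nsmul_eq_mul]
  push_cast
  rw [← sign_eq, mul_neg_one, ← sub_eq_add_neg]
  ring

theorem cardB_add_natCast (d m : ℕ) {s : ℝ} (hs₀ : 0 ≤ s) (hs₁ : s < 1) :
    cardB d (s + m) =
      ∑ j ∈ range (m + 1), (-1) ^ j * ((d + 1).choose j : ℝ) * ((s + m - j) ^ d / d !) := by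
  rw [cardB_eq_sum_truncPow]
  refine sum_congr_of_eq_on_inter (fun j _ hj ↦ ?_) (fun j _ hj ↦ ?_) (fun j _ hj ↦ ?_)
  · have hmj : ((m + 1 : ℕ) : ℝ) ≤ j := by exact_mod_cast not_lt.1 (mt mem_range.2 hj)
    push_cast at hmj
    rw [truncPow_of_neg d (by linarith), mul_zero]
  · rw [Nat.choose_eq_zero_of_lt (not_lt.1 (mt mem_range.2 hj))]
    simp
  · have hjm : (j : ℝ) ≤ m := by exact_mod_cast Nat.lt_succ_iff.1 (mem_range.1 hj)
    rw [truncPow_of_nonneg d (by linarith)]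

end TruncatedPower

section CubicMoments

theorem hasSum_quartic_mul_cardB_three (a b c d e x : ℝ) :
    HasSum
      (fun k : ℤ ↦ (a + b * (k - x) + c * (k - x) ^ 2 + d * (k - x) ^ 3 + e * (k - x) ^ 4) *
        cardB 3 (x + 2 - k))
      (a + c / 3 + e * (1 / 3 - Int.fract x ^ 2 * (1 - Int.fract x) ^ 2)) := by
  convert hasSum_mul_cardB 3 _ (x + 2) using 1
  have floor_add_two : ⌊x + 2⌋ = ⌊x⌋ + 2 := Int.floor_add_ofNat x 2
  have fract_add_two : Int.fract (x + 2) = Int.fract x := Int.fract_add_ofNat x 2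
  rw [floor_add_two, fract_add_two]
  have node_sub (m : ℕ) : ((⌊x⌋ + 2 - m : ℤ) : ℝ) - x = 2 - m - Int.fract x := by
    simp only [Int.fract]; push_cast; ring
  simp only [node_sub, cardB_add_natCast 3 _ (Int.fract_nonneg x) (Int.fract_lt_one x)]
  simp only [sum_range_succ, sum_range_zero, Nat.choose, Nat.factorial]
  push_cast
  ring

end CubicMoments

section QuasiInterpolant

/-- The coefficient functional of the cubic quasi-interpolant with unit step, at the node `t`. -/
noncomputable def qiCoeff (u : ℝ → ℝ) (t : ℝ) : ℝ :=
  (1 / 6) * (-u (t - 1) + 8 * u t - u (t + 1))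

theorem qiCoeff_sub (u v : ℝ → ℝ) (t : ℝ) :
    qiCoeff (fun y ↦ u y - v y) t = qiCoeff u t - qiCoeff v t := by
  simp only [qiCoeff]
  ring

theorem abs_qiCoeff_le {u g : ℝ → ℝ} (hug : ∀ y, |u y| ≤ g y) (t : ℝ) :
    |qiCoeff u t| ≤ (1 / 6) * (g (t - 1) + 8 * g t + g (t + 1)) := by
  have := abs_le.1 (hug (t - 1))
  have := abs_le.1 (hug t)
  have := abs_le.1 (hug (t + 1))
  rw [qiCoeff, abs_le]
  constructor <;> linarith

theorem Q3_eq_Q3_one_comp_mul {h : ℝ} (hh : h ≠ 0) (u : ℝ → ℝ) (x : ℝ) :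
    Q3 h u x = Q3 1 (fun y ↦ u (h * y)) (x / h) := by
  simp only [Q3, mul_one, div_one, mul_comm h, sub_div, mul_div_cancel_right₀ _ hh]

theorem hasSum_Q3_one (u : ℝ → ℝ) (x : ℝ) :
    HasSum (fun k : ℤ ↦ qiCoeff u k * cardB 3 (x + 2 - k)) (Q3 1 u x) := by
  have Q3_eq_tsum : Q3 1 u x = ∑' k : ℤ, qiCoeff u k * cardB 3 (x + 2 - k) := by
    simp only [Q3, qiCoeff, mul_one, div_one, sub_sub_eq_add_sub]
  exact Q3_eq_tsum ▸ (hasSum_mul_cardB 3 (fun k : ℤ ↦ qiCoeff u k) (x + 2)).summable.hasSum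

theorem Q3_one_cubic (a : ℕ → ℝ) (x : ℝ) :
    Q3 1 (fun y ↦ ∑ i ∈ range 4, a i * (y - x) ^ i) x = a 0 := by
  refine (hasSum_Q3_one _ x).unique ?_
  convert hasSum_quartic_mul_cardB_three (a 0 - a 2 / 3) (a 1 - a 3) (a 2) (a 3) 0 x using 1
  · ext k
    simp only [qiCoeff, sum_range_succ, sum_range_zero]
    ring
  · ring

end QuasiInterpolant

section ErrorBound

theorem abs_sub_taylor_le {u : ℝ → ℝ} {n : ℕ} {M : ℝ} (hu : ContDiff ℝ (n + 1) u)
    (hM : ∀ z, |iteratedDeriv (n + 1) u z| ≤ M) (x y : ℝ) :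
    |u y - ∑ i ∈ range (n + 1), iteratedDeriv i u x / i ! * (y - x) ^ i| ≤
      M * |y - x| ^ (n + 1) / (n + 1)! := by
  rcases eq_or_ne x y with rfl | hxy
  · simp [sum_range_succ']
  obtain ⟨z, -, hz⟩ := taylor_mean_remainder_lagrange_iteratedDeriv hxy hu.contDiffOn
  have taylor_eq : taylorWithinEval u n (Set.uIcc x y) x y =
      ∑ i ∈ range (n + 1), iteratedDeriv i u x / i ! * (y - x) ^ i := by
    rw [taylor_within_apply]
    refine sum_congr rfl fun i hi ↦ ?_
    have hin : (i : WithTop ℕ∞) ≤ n + 1 := by exact_mod_cast (mem_range.1 hi).le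
    rw [iteratedDerivWithin_eq_iteratedDeriv (uniqueDiffOn_uIcc hxy)
      (hu.of_le hin).contDiffAt Set.left_mem_uIcc, smul_eq_mul]
    ring
  rw [← taylor_eq, hz, abs_div, abs_mul, abs_pow, Nat.abs_cast]
  gcongr
  exact hM z

theorem abs_Q3_one_le_of_quartic_bound {r : ℝ → ℝ} {K x : ℝ}
    (hr : ∀ y, |r y| ≤ K * (y - x) ^ 4) : |Q3 1 r x| ≤ 14 / 9 * K := by
  have K_nonneg : 0 ≤ K := by simpa using (abs_nonneg _).trans (hr (x + 1))
  have term_le (k : ℤ) : ‖qiCoeff r k * cardB 3 (x + 2 - k)‖ ≤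
      (K / 3 + 0 * (k - x) + 2 * K * (k - x) ^ 2 + 0 * (k - x) ^ 3 +
        5 * K / 3 * (k - x) ^ 4) * cardB 3 (x + 2 - k) := by
    rw [norm_mul, Real.norm_eq_abs, Real.norm_of_nonneg (cardB_nonneg 3 _)]
    refine mul_le_mul_of_nonneg_right ((abs_qiCoeff_le hr k).trans_eq ?_) (cardB_nonneg 3 _)
    ring
  calc |Q3 1 r x|
      ≤ K / 3 + 2 * K / 3 + 5 * K / 3 * (1 / 3 - Int.fract x ^ 2 * (1 - Int.fract x) ^ 2) :=
        (hasSum_Q3_one r x).norm_le_of_bounded (hasSum_quartic_mul_cardB_three _ _ _ _ _ x) term_le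
    _ = 14 / 9 * K - 5 / 3 * (K * (Int.fract x ^ 2 * (1 - Int.fract x) ^ 2)) := by ring
    _ ≤ 14 / 9 * K := sub_le_self _ (by positivity)

theorem abs_sub_Q3_one_le {u : ℝ → ℝ} {M : ℝ} (hu : ContDiff ℝ 4 u)
    (hM : ∀ z, |iteratedDeriv 4 u z| ≤ M) (x : ℝ) : |u x - Q3 1 u x| ≤ 7 / 108 * M := by
  let p (y : ℝ) : ℝ := ∑ i ∈ range 4, iteratedDeriv i u x / i ! * (y - x) ^ i
  have remainder_le (y : ℝ) : |u y - p y| ≤ M / 24 * (y - x) ^ 4 := by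
    convert abs_sub_taylor_le (n := 3) (mod_cast hu) hM x y using 1
    rw [Even.pow_abs (by decide), show ((3 + 1)! : ℝ) = 24 by norm_num [Nat.factorial]]
    ring
  have Q3_p : Q3 1 p x = u x := by
    simpa using Q3_one_cubic (fun i ↦ iteratedDeriv i u x / i !) x
  have Q3_remainder : Q3 1 (fun y ↦ u y - p y) x = Q3 1 u x - u x := by
    refine (hasSum_Q3_one _ x).unique ?_
    simpa only [qiCoeff_sub, sub_mul, Q3_p] using (hasSum_Q3_one u x).sub (hasSum_Q3_one p x)
  calc |u x - Q3 1 u x| = |Q3 1 (fun y ↦ u y - p y) x| := by rw [Q3_remainder, abs_sub_comm]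
    _ ≤ 14 / 9 * (M / 24) := abs_Q3_one_le_of_quartic_bound remainder_le
    _ = 7 / 108 * M := by ring

theorem abs_sub_Q3_le {h : ℝ} (hh : h ≠ 0) {u : ℝ → ℝ} {M : ℝ} (hu : ContDiff ℝ 4 u)
    (hM : ∀ z, |iteratedDeriv 4 u z| ≤ M) (x : ℝ) :
    |u x - Q3 h u x| ≤ 7 / 108 * h ^ 4 * M := by
  have rescaled_deriv_le (z : ℝ) : |iteratedDeriv 4 (fun y ↦ u (h * y)) z| ≤ h ^ 4 * M := by
    rw [iteratedDeriv_comp_const_mul hu, abs_mul, abs_of_nonneg (by positivity : 0 ≤ h ^ 4)]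
    gcongr
    exact hM _
  have rescaled_bound := abs_sub_Q3_one_le (by fun_prop) rescaled_deriv_le (x / h)
  rwa [← Q3_eq_Q3_one_comp_mul hh, mul_div_cancel₀ _ hh, ← mul_assoc] at rescaled_bound

end ErrorBound

theorem cbsqi_error_bound :
    ∃ C : ℝ, 0 < C ∧ C < 1 ∧
      ∀ h : ℝ, 0 < h → ∀ u : ℝ → ℝ, ContDiff ℝ 4 u →
        (∃ M : ℝ, ∀ x : ℝ, |iteratedDeriv 4 u x| ≤ M) →
        ∀ x : ℝ, |u x - Q3 h u x| ≤ C * h ^ 4 * ⨆ y : ℝ, |iteratedDeriv 4 u y| := by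
  refine ⟨7 / 108, by norm_num, by norm_num, fun h hh u hu ⟨M, hM⟩ x ↦ ?_⟩
  have bddAbove : BddAbove (Set.range fun y ↦ |iteratedDeriv 4 u y|) :=
    ⟨M, Set.forall_mem_range.2 hM⟩
  exact abs_sub_Q3_le hh.ne' hu (le_ciSup bddAbove) x
end

section
/- The derivative formula of the quintic B-spline quasi-interpolant is exact on polynomials of degree 6: for every polynomial p of degree at most 6, every x ∈ ℝ and every h ≠ 0, (1/h)·[ −(13/5760)p(x−4h) − (1/320)p(x−3h) + (341/2880)p(x−2h) − (2069/2880)p(x−h) + (2069/2880)p(x+h) − (341/2880)p(x+2h) + (1/320)p(x+3h) + (13/5760)p(x+4h) ] = p'(x). -/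
/-!
Expand `p` at `x` by Taylor's formula. An antisymmetric stencil cancels all even powers of `h`, so
it reproduces `h * p'(x)` on degree at most `6` as soon as its odd moments of orders `1`, `3`, `5`
are `1`, `0`, `0`; degree `6` comes for free.
-/

open Polynomial

section CentralStencil

variable {R ι : Type*} [CommRing R]

theorem eval_add_sub_eval_sub_eq_sum_taylor_coeff {p : R[X]} {N : ℕ} (hp : p.natDegree < N)
    (x y : R) :
    p.eval (x + y) - p.eval (x - y)
      = ∑ k ∈ Finset.range N, (taylor x p).coeff k * (y ^ k - (-y) ^ k) := by
  have eval_add (z : R) :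
      p.eval (x + z) = ∑ k ∈ Finset.range N, (taylor x p).coeff k * z ^ k := by
    rw [add_comm, ← taylor_eval, eval_eq_sum_range' (by rwa [natDegree_taylor])]
  rw [sub_eq_add_neg x, eval_add, eval_add, ← Finset.sum_sub_distrib]
  simp only [mul_sub]

theorem sum_mul_pow_sub_neg_pow {s : Finset ι} {w c : ι → R} {k : ℕ}
    (hw : Odd k → 2 * ∑ i ∈ s, w i * c i ^ k = if k = 1 then 1 else 0) (h : R) :
    ∑ i ∈ s, w i * ((c i * h) ^ k - (-(c i * h)) ^ k) = if k = 1 then h else 0 := by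
  rcases k.even_or_odd with even | odd
  · have ne_one : k ≠ 1 := by rintro rfl; exact Nat.not_even_one even
    simp [even.neg_pow, ne_one]
  · calc ∑ i ∈ s, w i * ((c i * h) ^ k - (-(c i * h)) ^ k)
        = (2 * ∑ i ∈ s, w i * c i ^ k) * h ^ k := by
          rw [Finset.mul_sum, Finset.sum_mul]
          refine Finset.sum_congr rfl fun i _ ↦ ?_
          rw [odd.neg_pow]
          ring
      _ = if k = 1 then h else 0 := by
          rw [hw odd]
          split_ifs with eq_one <;> simp [eq_one]

theorem sum_mul_eval_add_sub_eval_sub_eq_mul_eval_derivative {p : R[X]} {N : ℕ}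
    (hp : p.natDegree < N) {s : Finset ι} {w c : ι → R}
    (hw : ∀ k < N, Odd k → 2 * ∑ i ∈ s, w i * c i ^ k = if k = 1 then 1 else 0) (x h : R) :
    ∑ i ∈ s, w i * (p.eval (x + c i * h) - p.eval (x - c i * h)) = h * p.derivative.eval x := by
  calc ∑ i ∈ s, w i * (p.eval (x + c i * h) - p.eval (x - c i * h))
      = ∑ k ∈ Finset.range N, (taylor x p).coeff k *
          ∑ i ∈ s, w i * ((c i * h) ^ k - (-(c i * h)) ^ k) := by
        simp only [eval_add_sub_eval_sub_eq_sum_taylor_coeff hp, Finset.mul_sum]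
        rw [Finset.sum_comm]
        simp only [mul_left_comm]
    _ = ∑ k ∈ Finset.range N, (taylor x p).coeff k * if k = 1 then h else 0 :=
        Finset.sum_congr rfl fun k hk ↦ by
          rw [sum_mul_pow_sub_neg_pow (hw k (Finset.mem_range.mp hk))]
    _ = (taylor x p).coeff 1 * h := by
        rw [Finset.sum_eq_single 1 (fun k _ ne_one ↦ by simp [ne_one]), if_pos rfl]
        intro one_notMem
        have natDegree_lt : (taylor x p).natDegree < 1 := by
          rw [natDegree_taylor]
          exact hp.trans_le (by simpa using one_notMem)
        rw [coeff_eq_zero_of_natDegree_lt natDegree_lt, zero_mul]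
    _ = h * p.derivative.eval x := by rw [taylor_coeff_one, mul_comm]

end CentralStencil

section Quintic

variable {K : Type*} [Field K]

/-- The weights of the derivative of the quintic B-spline quasi-interpolant at the nodes
`x + h`, …, `x + 4h`. The entry with index `i` belongs to `x + (i + 1)h`; the weight at the
mirrored node `x - (i + 1)h` is its negative, and the one at `x` is zero. -/
def qnbsqiWeight : Fin 4 → K :=
  ![2069 / 2880, -(341 / 2880), 1 / 320, 13 / 5760]

theorem sum_qnbsqiWeight_mul (f : K → K) :
    ∑ i : Fin 4, qnbsqiWeight i * f ((i : ℕ) + 1)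
      = 2069 / 2880 * f 1 - 341 / 2880 * f 2 + 1 / 320 * f 3 + 13 / 5760 * f 4 := by
  simp [Fin.sum_univ_four, qnbsqiWeight, one_add_one_eq_two, two_add_one_eq_three,
    three_add_one_eq_four, sub_eq_add_neg]

variable [CharZero K]

theorem two_mul_sum_qnbsqiWeight_mul_pow {k : ℕ} (hk : k < 7) (odd : Odd k) :
    2 * ∑ i : Fin 4, qnbsqiWeight i * ((i : ℕ) + 1 : K) ^ k = if k = 1 then 1 else 0 := by
  have k_cases : k = 1 ∨ k = 3 ∨ k = 5 := by grind
  rw [sum_qnbsqiWeight_mul (· ^ k)]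
  rcases k_cases with rfl | rfl | rfl <;> norm_num

theorem qnbsqi_derivative_exact_on_degree_six_general (p : K[X]) (hp : p.degree ≤ 6)
    (x h : K) (hh : h ≠ 0) :
    (1 / h) * (-(13 / 5760) * p.eval (x - 4 * h) - (1 / 320) * p.eval (x - 3 * h)
        + (341 / 2880) * p.eval (x - 2 * h) - (2069 / 2880) * p.eval (x - h)
        + (2069 / 2880) * p.eval (x + h) - (341 / 2880) * p.eval (x + 2 * h)
        + (1 / 320) * p.eval (x + 3 * h) + (13 / 5760) * p.eval (x + 4 * h))
      = p.derivative.eval x := by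
  have natDegree_lt : p.natDegree < 7 := Nat.lt_succ_of_le (natDegree_le_of_degree_le hp)
  have stencil := sum_mul_eval_add_sub_eval_sub_eq_mul_eval_derivative natDegree_lt
    (fun _ ↦ two_mul_sum_qnbsqiWeight_mul_pow) x h
  rw [sum_qnbsqiWeight_mul fun c ↦ p.eval (x + c * h) - p.eval (x - c * h), one_mul] at stencil
  rw [one_div, inv_mul_eq_iff_eq_mul₀ hh, ← stencil]
  ring

end Quintic

/-- The derivative formula of the quintic B-spline quasi-interpolant is exact on
polynomials of degree at most 6. -/
theorem qnbsqi_derivative_exact_on_degree_six (p : Polynomial ℝ) (hp : p.degree ≤ 6)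
    (x : ℝ) (h : ℝ) (hh : h ≠ 0) :
    (1 / h) * (-(13 / 5760 : ℝ) * p.eval (x - 4 * h) - (1 / 320) * p.eval (x - 3 * h)
        + (341 / 2880) * p.eval (x - 2 * h) - (2069 / 2880) * p.eval (x - h)
        + (2069 / 2880) * p.eval (x + h) - (341 / 2880) * p.eval (x + 2 * h)
        + (1 / 320) * p.eval (x + 3 * h) + (13 / 5760) * p.eval (x + 4 * h))
      = (Polynomial.derivative p).eval x :=
  qnbsqi_derivative_exact_on_degree_six_general p hp x h hh
end

section
/- The nodal-value formula of the quintic B-spline quasi-interpolant is exact on quintic polynomials: for every polynomial p of degree at most 5, every x ∈ ℝ and every h ∈ ℝ, (13/28800)(p(x−4h) + p(x+4h)) + (113/14400)(p(x−3h) + p(x+3h)) − (101/1800)(p(x−2h) + p(x+2h)) + (2111/14400)(p(x−h) + p(x+h)) + (2311/2880)p(x) = p(x). -/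
/-!
Taylor expansion at `x` shows that `p (x - y) + p (x + y)` contains only even powers of `y`, so a
symmetric rule `∑ᵢ cᵢ (p (x - tᵢ h) + p (x + tᵢ h))` reproduces a multiple of `p x` for all `p` of
degree at most `2 m + 1` as soon as its even moments `∑ᵢ cᵢ tᵢ ^ (2 k)`, `1 ≤ k ≤ m`, vanish. For
quintics only the second and fourth moments matter. Multiplying the coefficients by their common
denominator `28800` makes both of them integer identities, so the rule holds in every commutative
ring.
-/

open Polynomial

theorem eval_add_eq_sum_range_hasseDeriv {R : Type*} [CommSemiring R] {p : R[X]} {n : ℕ}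
    (hp : p.natDegree < n) (x y : R) :
    p.eval (x + y) = ∑ k ∈ Finset.range n, (hasseDeriv k p).eval x * y ^ k := by
  have hn : (taylor x p).natDegree < n := by rwa [natDegree_taylor]
  rw [add_comm, ← taylor_eval, eval_eq_sum_range' hn]
  simp only [taylor_coeff]

theorem sum_range_two_mul_eq_sum_even_add_odd {M : Type*} [AddCommMonoid M] (f : ℕ → M) (n : ℕ) :
    ∑ k ∈ Finset.range (2 * n), f k = ∑ k ∈ Finset.range n, (f (2 * k) + f (2 * k + 1)) := by
  induction n with
  | zero => simp
  | succ n ih =>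
    rw [mul_add_one, Finset.sum_range_succ, Finset.sum_range_succ, ih, Finset.sum_range_succ,
      add_assoc]

section SymmetricRule

variable {R : Type*} [CommRing R] {p : R[X]} {m : ℕ}

theorem eval_sub_add_eval_add_eq_two_mul_sum_even (hp : p.natDegree ≤ 2 * m + 1) (x y : R) :
    p.eval (x - y) + p.eval (x + y) =
      2 * ∑ k ∈ Finset.range (m + 1), (hasseDeriv (2 * k) p).eval x * y ^ (2 * k) := by
  have hlt : p.natDegree < 2 * (m + 1) := by lia
  rw [sub_eq_add_neg, eval_add_eq_sum_range_hasseDeriv hlt, eval_add_eq_sum_range_hasseDeriv hlt,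
    ← Finset.sum_add_distrib, sum_range_two_mul_eq_sum_even_add_odd, Finset.mul_sum]
  refine Finset.sum_congr rfl fun k _ => ?_
  rw [(even_two_mul k).neg_pow, (odd_two_mul_add_one k).neg_pow]
  ring

theorem sum_mul_eval_sub_add_eval_add_of_even_moments_eq_zero {ι : Type*} {s : Finset ι}
    {c t : ι → R} (hp : p.natDegree ≤ 2 * m + 1)
    (hmoment : ∀ k ∈ Finset.Icc 1 m, ∑ i ∈ s, c i * t i ^ (2 * k) = 0) (x h : R) :
    ∑ i ∈ s, c i * (p.eval (x - t i * h) + p.eval (x + t i * h)) =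
      2 * (∑ i ∈ s, c i) * p.eval x := by
  calc
    _ = 2 * ∑ k ∈ Finset.range (m + 1),
          (hasseDeriv (2 * k) p).eval x * h ^ (2 * k) * ∑ i ∈ s, c i * t i ^ (2 * k) := by
      simp only [eval_sub_add_eval_add_eq_two_mul_sum_even hp, Finset.mul_sum]
      rw [Finset.sum_comm]
      refine Finset.sum_congr rfl fun k _ => Finset.sum_congr rfl fun i _ => ?_
      ring
    _ = 2 * (p.eval x * ∑ i ∈ s, c i) := by
      rw [Finset.sum_eq_single_of_mem 0 (by simp)]
      · simp
      · intro k hk hk0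
        rw [hmoment k (by grind), mul_zero]
    _ = 2 * (∑ i ∈ s, c i) * p.eval x := by ring

end SymmetricRule

/-- The off-centre coefficients of the nodal-value formula of the quintic B-spline
quasi-interpolant, multiplied by their common denominator `28800`. Entry `j` is the coefficient of
`p (x - (j + 1) h) + p (x + (j + 1) h)`. -/
def qnbsqiScaledWeight : Fin 4 → ℤ := ![4222, -1616, 226, 13]

theorem sum_qnbsqiScaledWeight : ∑ j, qnbsqiScaledWeight j = 2845 := by decide

theorem even_moment_qnbsqiScaledWeight_eq_zero {k : ℕ} (hk : k ∈ Finset.Icc 1 2) :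
    ∑ j, qnbsqiScaledWeight j * ((j : ℤ) + 1) ^ (2 * k) = 0 := by
  revert k
  decide

theorem qnbsqi_nodal_exact_on_quintics_general {R : Type*} [CommRing R] (p : R[X])
    (hp : p.degree ≤ 5) (x h : R) :
    13 * (p.eval (x - 4 * h) + p.eval (x + 4 * h))
      + 226 * (p.eval (x - 3 * h) + p.eval (x + 3 * h))
      - 1616 * (p.eval (x - 2 * h) + p.eval (x + 2 * h))
      + 4222 * (p.eval (x - h) + p.eval (x + h))
      + 23110 * p.eval x = 28800 * p.eval x := by
  have hdeg : p.natDegree ≤ 2 * 2 + 1 := natDegree_le_of_degree_le hp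
  have hmoment (k : ℕ) (hk : k ∈ Finset.Icc 1 2) :
      ∑ j, (qnbsqiScaledWeight j : R) * ((j : R) + 1) ^ (2 * k) = 0 := by
    exact_mod_cast congrArg (Int.cast : ℤ → R) (even_moment_qnbsqiScaledWeight_eq_zero hk)
  have hsum : ∑ j, (qnbsqiScaledWeight j : R) = 2845 := by
    exact_mod_cast congrArg (Int.cast : ℤ → R) sum_qnbsqiScaledWeight
  have hrule :
      4222 * (p.eval (x - h) + p.eval (x + h))
        + -1616 * (p.eval (x - 2 * h) + p.eval (x + 2 * h))
        + 226 * (p.eval (x - 3 * h) + p.eval (x + 3 * h))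
        + 13 * (p.eval (x - 4 * h) + p.eval (x + 4 * h)) = 2 * 2845 * p.eval x := by
    rw [← hsum, ← sum_mul_eval_sub_add_eval_add_of_even_moments_eq_zero hdeg hmoment x h]
    simp only [Fin.sum_univ_four, qnbsqiScaledWeight, Matrix.cons_val]
    norm_num
  linear_combination hrule

/-- The nodal-value formula of the quintic B-spline quasi-interpolant is exact on
quintic polynomials. -/
theorem qnbsqi_nodal_exact_on_quintics (p : Polynomial ℝ) (hp : p.degree ≤ 5)
    (x h : ℝ) :
    (13 / 28800 : ℝ) * (p.eval (x - 4 * h) + p.eval (x + 4 * h))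
      + (113 / 14400) * (p.eval (x - 3 * h) + p.eval (x + 3 * h))
      - (101 / 1800) * (p.eval (x - 2 * h) + p.eval (x + 2 * h))
      + (2111 / 14400) * (p.eval (x - h) + p.eval (x + h))
      + (2311 / 2880) * p.eval x = p.eval x := by
  linear_combination (1 / 28800) * qnbsqi_nodal_exact_on_quintics_general p hp x h
end

section
/- The derivative formula of the quadric (degree 4) B-spline quasi-interpolant is exact on quartic polynomials: for every polynomial p of degree at most 4, every x ∈ ℝ and every h ≠ 0, (1/h)·[ −(47/55296)p(x−4h) − (101/9216)p(x−3h) + (3751/27648)p(x−2h) − (20323/27648)p(x−h) + (20323/27648)p(x+h) − (3751/27648)p(x+2h) + (101/9216)p(x+3h) + (47/55296)p(x+4h) ] = p'(x). -/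
/-!
The weights are antisymmetric about the node `x`, so in the Taylor expansion of `p` at `x` every
even-order term cancels. The term of odd order `i` is multiplied by twice the `i`-th moment
`∑ k, w k * k ^ i` of the weights on the positive side. For degree at most `4` only `i = 1` and
`i = 3` remain: the first moment is `1 / 2` and the third one vanishes.
-/

section AntisymmStencil

open Polynomial

variable {R ι : Type*} [CommRing R] [Fintype ι]

/-- The antisymmetric finite-difference stencil at `x` with step `h`, having weight `w k` at
`x + c k * h` and `-w k` at `x - c k * h`. Only one node of each symmetric pair is indexed, which
builds the antisymmetry of the weights into the definition. -/
def antisymmStencil (w c : ι → R) (f : R → R) (x h : R) : R :=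
  ∑ k, w k * (f (x + c k * h) - f (x - c k * h))

lemma sum_range_mul_pow_sub_neg_pow (a : ℕ → R) (t : R) (m : ℕ) :
    ∑ i ∈ Finset.range (2 * m + 1), a i * (t ^ i - (-t) ^ i) =
      2 * ∑ j ∈ Finset.range m, a (2 * j + 1) * t ^ (2 * j + 1) := by
  induction m with
  | zero => simp
  | succ m ih =>
    have odd_term : (-t) ^ (2 * m + 1) = -t ^ (2 * m + 1) := (odd_two_mul_add_one m).neg_pow t
    have even_term : (-t) ^ (2 * m + 2) = t ^ (2 * m + 2) := (even_two_mul (m + 1)).neg_pow t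
    rw [show 2 * (m + 1) + 1 = 2 * m + 1 + 1 + 1 by ring, Finset.sum_range_succ,
      Finset.sum_range_succ, ih, odd_term, even_term, Finset.sum_range_succ]
    ring

lemma eval_add_sub_eval_sub {p : R[X]} {m : ℕ} (hp : p.natDegree ≤ 2 * m) (x t : R) :
    p.eval (x + t) - p.eval (x - t) =
      2 * ∑ j ∈ Finset.range m, (taylor x p).coeff (2 * j + 1) * t ^ (2 * j + 1) := by
  have taylor_degree : (taylor x p).natDegree < 2 * m + 1 := by
    rw [natDegree_taylor]
    exact Nat.lt_succ_of_le hp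
  have eval_shift (s : R) :
      p.eval (x + s) = ∑ i ∈ Finset.range (2 * m + 1), (taylor x p).coeff i * s ^ i := by
    rw [← eval_eq_sum_range' taylor_degree, taylor_eval, add_comm]
  rw [sub_eq_add_neg x t, eval_shift, eval_shift, ← Finset.sum_sub_distrib,
    ← sum_range_mul_pow_sub_neg_pow]
  simp only [mul_sub]

lemma antisymmStencil_eval_eq_sum_moments (w c : ι → R) {p : R[X]} {m : ℕ}
    (hp : p.natDegree ≤ 2 * m) (x h : R) :
    antisymmStencil w c p.eval x h =
      2 * ∑ j ∈ Finset.range m, (∑ k, w k * c k ^ (2 * j + 1)) *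
        ((taylor x p).coeff (2 * j + 1) * h ^ (2 * j + 1)) := by
  simp only [antisymmStencil, eval_add_sub_eval_sub hp, Finset.mul_sum, Finset.sum_mul]
  rw [Finset.sum_comm]
  refine Finset.sum_congr rfl fun j _ ↦ Finset.sum_congr rfl fun k _ ↦ ?_
  ring

lemma antisymmStencil_eval_eq_mul_derivative {w c : ι → R} {m : ℕ}
    (higher_moments : ∀ j, j + 1 < m → ∑ k, w k * c k ^ (2 * (j + 1) + 1) = 0)
    {p : R[X]} (hp : p.natDegree ≤ 2 * m) (x h : R) :
    antisymmStencil w c p.eval x h = 2 * (∑ k, w k * c k) * (h * p.derivative.eval x) := by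
  rw [antisymmStencil_eval_eq_sum_moments w c hp]
  cases m with
  | zero => simp [derivative_of_natDegree_zero (Nat.le_zero.mp hp)]
  | succ m =>
    have higher_terms : ∑ j ∈ Finset.range m, (∑ k, w k * c k ^ (2 * (j + 1) + 1)) *
        ((taylor x p).coeff (2 * (j + 1) + 1) * h ^ (2 * (j + 1) + 1)) = 0 :=
      Finset.sum_eq_zero fun j hj ↦ by
        rw [higher_moments j (Nat.succ_lt_succ (Finset.mem_range.mp hj)), zero_mul]
    rw [Finset.sum_range_succ', higher_terms]
    simp only [mul_zero, zero_add, pow_one, taylor_coeff_one]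
    ring

end AntisymmStencil

section QuarticQuasiInterpolant

variable {K : Type*} [Field K]

/-- The coefficients `b_{k,1}` of the differentiated quartic B-spline quasi-interpolant at the
nodes `x + h, …, x + 4 * h`; those at the mirrored nodes are their negatives. -/
def qdbsqiWeight (K : Type*) [Field K] : Fin 4 → K :=
  ![20323 / 27648, -3751 / 27648, 101 / 9216, 47 / 55296]

/-- The distances `1, …, 4` of the nodes `x + h, …, x + 4 * h` from `x`, in units of `h`. -/
def qdbsqiOffset (K : Type*) [Field K] : Fin 4 → K :=
  ![1, 2, 3, 4]

lemma ne_zero_of_eq_two_pow_mul_three_pow (two_ne : (2 : K) ≠ 0) (three_ne : (3 : K) ≠ 0)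
    {c : K} (a b : ℕ) (hc : c = 2 ^ a * 3 ^ b) : c ≠ 0 :=
  hc ▸ mul_ne_zero (pow_ne_zero a two_ne) (pow_ne_zero b three_ne)

lemma qdbsqiWeight_eq_div (two_ne : (2 : K) ≠ 0) (three_ne : (3 : K) ≠ 0) :
    qdbsqiWeight K = fun k ↦ ![40646, -7502, 606, 47] k / 55296 := by
  have ne_55296 : (55296 : K) ≠ 0 :=
    ne_zero_of_eq_two_pow_mul_three_pow two_ne three_ne 11 3 (by norm_num)
  have ne_27648 : (27648 : K) ≠ 0 :=
    ne_zero_of_eq_two_pow_mul_three_pow two_ne three_ne 10 3 (by norm_num)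
  have ne_9216 : (9216 : K) ≠ 0 :=
    ne_zero_of_eq_two_pow_mul_three_pow two_ne three_ne 10 2 (by norm_num)
  ext k
  fin_cases k
  · exact (div_eq_div_iff ne_27648 ne_55296).mpr (by norm_num)
  · exact (div_eq_div_iff ne_27648 ne_55296).mpr (by norm_num)
  · exact (div_eq_div_iff ne_9216 ne_55296).mpr (by norm_num)
  · rfl

lemma two_mul_sum_qdbsqiWeight_mul_offset (two_ne : (2 : K) ≠ 0) (three_ne : (3 : K) ≠ 0) :
    2 * ∑ k, qdbsqiWeight K k * qdbsqiOffset K k = 1 := by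
  have ne_55296 : (55296 : K) ≠ 0 :=
    ne_zero_of_eq_two_pow_mul_three_pow two_ne three_ne 11 3 (by norm_num)
  simp only [qdbsqiWeight_eq_div two_ne three_ne, qdbsqiOffset, Fin.sum_univ_four, Matrix.cons_val]
  field_simp
  norm_num

lemma sum_qdbsqiWeight_mul_offset_pow_three (two_ne : (2 : K) ≠ 0) (three_ne : (3 : K) ≠ 0) :
    ∑ k, qdbsqiWeight K k * qdbsqiOffset K k ^ 3 = 0 := by
  simp only [qdbsqiWeight_eq_div two_ne three_ne, qdbsqiOffset, Fin.sum_univ_four, Matrix.cons_val]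
  ring

lemma antisymmStencil_qdbsqi_eval (two_ne : (2 : K) ≠ 0) (three_ne : (3 : K) ≠ 0)
    {p : Polynomial K} (hp : p.degree ≤ 4) (x h : K) :
    antisymmStencil (qdbsqiWeight K) (qdbsqiOffset K) p.eval x h = h * p.derivative.eval x := by
  have higher_moments (j : ℕ) (hj : j + 1 < 2) :
      ∑ k, qdbsqiWeight K k * qdbsqiOffset K k ^ (2 * (j + 1) + 1) = 0 := by
    obtain rfl : j = 0 := by omega
    exact sum_qdbsqiWeight_mul_offset_pow_three two_ne three_ne
  rw [antisymmStencil_eval_eq_mul_derivative higher_moments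
    (Polynomial.natDegree_le_of_degree_le hp),
    two_mul_sum_qdbsqiWeight_mul_offset two_ne three_ne, one_mul]

theorem qdbsqi_derivative_exact_on_quartics_general (two_ne : (2 : K) ≠ 0) (three_ne : (3 : K) ≠ 0)
    (p : Polynomial K) (hp : p.degree ≤ 4) (x : K) (h : K) (hh : h ≠ 0) :
    (1 / h) * (-(47 / 55296 : K) * p.eval (x - 4 * h) - (101 / 9216) * p.eval (x - 3 * h)
        + (3751 / 27648) * p.eval (x - 2 * h) - (20323 / 27648) * p.eval (x - h)
        + (20323 / 27648) * p.eval (x + h) - (3751 / 27648) * p.eval (x + 2 * h)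
        + (101 / 9216) * p.eval (x + 3 * h) + (47 / 55296) * p.eval (x + 4 * h))
      = (Polynomial.derivative p).eval x := by
  rw [one_div, inv_mul_eq_iff_eq_mul₀ hh, ← antisymmStencil_qdbsqi_eval two_ne three_ne hp]
  simp only [antisymmStencil, qdbsqiWeight, qdbsqiOffset, Fin.sum_univ_four, Matrix.cons_val,
    one_mul]
  ring

end QuarticQuasiInterpolant

/-- The derivative formula of the quadric (degree 4) B-spline quasi-interpolant is
exact on quartic polynomials. -/
theorem qdbsqi_derivative_exact_on_quartics (p : Polynomial ℝ) (hp : p.degree ≤ 4)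
    (x : ℝ) (h : ℝ) (hh : h ≠ 0) :
    (1 / h) * (-(47 / 55296 : ℝ) * p.eval (x - 4 * h) - (101 / 9216) * p.eval (x - 3 * h)
        + (3751 / 27648) * p.eval (x - 2 * h) - (20323 / 27648) * p.eval (x - h)
        + (20323 / 27648) * p.eval (x + h) - (3751 / 27648) * p.eval (x + 2 * h)
        + (101 / 9216) * p.eval (x + 3 * h) + (47 / 55296) * p.eval (x + 4 * h))
      = (Polynomial.derivative p).eval x :=
  qdbsqi_derivative_exact_on_quartics_general two_ne_zero three_ne_zero p hp x h hh
end

section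
/- The quadratic BSQI first-derivative approximation is second-order accurate: if u : ℝ → ℝ is three times continuously differentiable, then for every x ∈ ℝ, the function h ↦ (1/h)·[ (1/16)u(x−2h) − (5/8)u(x−h) + (5/8)u(x+h) − (1/16)u(x+2h) ] − u'(x) is O(h²) as h → 0. -/
open Filter Topology Asymptotics

/-!
Substituting the Taylor expansion of `f` at `x` into `∑ i, w i • f (x + c i * h)` and exchanging
the sums, the coefficient of `h ^ k / k !` is the moment `∑ i, w i * c i ^ k` times the `k`-th
derivative of `f`. A stencil thus approximates the `d`-th derivative to order `n - d` as soon as its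
moments of order `k < n` vanish, except for the `d`-th one, which is `d !`. The quasi-interpolant
stencil has antisymmetric weights, so its even moments vanish, and its first moment is `1`; its
third moment is `1 / 4`, which limits the order to two.
-/

section Stencil

open scoped Nat

variable {E ι : Type*} [NormedAddCommGroup E] [NormedSpace ℝ E] [Fintype ι]
  {f : ℝ → E} {x : ℝ} {d n : ℕ}

/-- The value at `x` of the finite-difference stencil of step `h` with weights `w` and nodes
`x + c i * h`, without any normalization by a power of `h`. -/
noncomputable def stencilSum (w c : ι → ℝ) (f : ℝ → E) (x h : ℝ) : E :=
  ∑ i, w i • f (x + c i * h)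

/-- The `k`-th moment of the stencil with weights `w` and nodes `c`. The moments determine the
derivative a stencil approximates and to which order. -/
noncomputable def stencilMoment (w c : ι → ℝ) (k : ℕ) : ℝ :=
  ∑ i, w i * c i ^ k

theorem taylor_isLittleO_of_contDiffAt (hf : ContDiffAt ℝ n f x) :
    (fun h : ℝ => f (x + h) - ∑ k ∈ Finset.range (n + 1), (h ^ k / k !) • iteratedDeriv k f x)
      =o[𝓝 0] fun h => h ^ n := by
  obtain ⟨v, hv, hfv⟩ := hf.contDiffOn le_rfl (by simp)
  obtain ⟨ε, hε, hball⟩ := Metric.mem_nhds_iff.mp hv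
  have hx : x ∈ Metric.ball x ε := Metric.mem_ball_self hε
  have taylor_at_x := taylor_isLittleO (convex_ball x ε) hx (hfv.mono hball)
  rw [Metric.isOpen_ball.nhdsWithin_eq hx] at taylor_at_x
  have shift : Tendsto (fun h : ℝ => x + h) (𝓝 0) (𝓝 x) :=
    (continuous_const_add x).tendsto' 0 x (add_zero x)
  refine (taylor_at_x.comp_tendsto shift).congr (fun h => ?_) fun h => ?_
  · simp only [Function.comp_apply, taylor_within_apply, add_sub_cancel_left,
      iteratedDerivWithin_of_isOpen Metric.isOpen_ball hx, div_eq_inv_mul]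
  · simp only [Function.comp_apply, add_sub_cancel_left]

theorem taylor_isBigO_of_contDiffAt (hf : ContDiffAt ℝ n f x) :
    (fun h : ℝ => f (x + h) - ∑ k ∈ Finset.range n, (h ^ k / k !) • iteratedDeriv k f x)
      =O[𝓝 0] fun h => h ^ n := by
  have last_term : (fun h : ℝ => (h ^ n / n !) • iteratedDeriv n f x) =O[𝓝 0] fun h => h ^ n := by
    refine .of_bound (‖iteratedDeriv n f x‖ / n !) (.of_forall fun h => le_of_eq ?_)
    rw [norm_smul, norm_div, Real.norm_natCast]
    ring
  refine ((taylor_isLittleO_of_contDiffAt hf).isBigO.add last_term).congr_left fun h => ?_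
  rw [Finset.sum_range_succ]
  abel

theorem taylor_isBigO_dilation (hf : ContDiffAt ℝ n f x) (a : ℝ) :
    (fun h : ℝ => f (x + a * h) -
        ∑ k ∈ Finset.range n, ((a * h) ^ k / k !) • iteratedDeriv k f x)
      =O[𝓝 0] fun h => h ^ n := by
  have dilate : Tendsto (fun h : ℝ => a * h) (𝓝 0) (𝓝 0) :=
    (continuous_const_mul a).tendsto' 0 0 (mul_zero a)
  have pow_isBigO : (fun h : ℝ => (a * h) ^ n) =O[𝓝 0] fun h => h ^ n :=
    (isBigO_const_mul_self a id (𝓝 0)).pow n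
  exact ((taylor_isBigO_of_contDiffAt hf).comp_tendsto dilate).trans pow_isBigO

theorem sum_smul_taylor_eq_sum_stencilMoment (w c : ι → ℝ) (f : ℝ → E) (x h : ℝ) (n : ℕ) :
    ∑ i, w i • ∑ k ∈ Finset.range n, ((c i * h) ^ k / k !) • iteratedDeriv k f x =
      ∑ k ∈ Finset.range n, (stencilMoment w c k * (h ^ k / k !)) • iteratedDeriv k f x := by
  simp only [stencilMoment, Finset.smul_sum, Finset.sum_mul, Finset.sum_smul, smul_smul]
  rw [Finset.sum_comm]
  simp only [mul_pow, mul_div_assoc, mul_assoc]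

theorem stencilSum_sub_sum_stencilMoment_isBigO (hf : ContDiffAt ℝ n f x) (w c : ι → ℝ) :
    (fun h : ℝ => stencilSum w c f x h -
        ∑ k ∈ Finset.range n, (stencilMoment w c k * (h ^ k / k !)) • iteratedDeriv k f x)
      =O[𝓝 0] fun h => h ^ n := by
  have weighted_remainders := IsBigO.sum (s := Finset.univ) fun i _ =>
    (taylor_isBigO_dilation hf (c i)).const_smul_left (w i)
  refine weighted_remainders.congr_left fun h => ?_
  simp only [Finset.sum_apply, Pi.smul_apply, smul_sub, Finset.sum_sub_distrib,
    sum_smul_taylor_eq_sum_stencilMoment, stencilSum]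

theorem stencilSum_sub_iteratedDeriv_isBigO (hf : ContDiffAt ℝ n f x) {w c : ι → ℝ} (hd : d < n)
    (hmoment : ∀ k < n, stencilMoment w c k = if k = d then (d ! : ℝ) else 0) :
    (fun h : ℝ => (h ^ d)⁻¹ • stencilSum w c f x h - iteratedDeriv d f x)
      =O[𝓝[≠] 0] fun h => h ^ (n - d) := by
  have main_term (h : ℝ) :
      ∑ k ∈ Finset.range n, (stencilMoment w c k * (h ^ k / k !)) • iteratedDeriv k f x =
        h ^ d • iteratedDeriv d f x := by
    rw [Finset.sum_eq_single_of_mem d (Finset.mem_range.mpr hd) fun k hk hkd => by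
      rw [hmoment k (Finset.mem_range.mp hk), if_neg hkd, zero_mul, zero_smul],
      hmoment d hd, if_pos rfl, mul_div_cancel₀ _ (by positivity)]
  have remainder := (stencilSum_sub_sum_stencilMoment_isBigO hf w c).mono
    (nhdsWithin_le_nhds (s := {0}ᶜ))
  simp only [main_term] at remainder
  refine ((isBigO_refl (fun h : ℝ => (h ^ d)⁻¹) _).smul remainder).congr' ?_ ?_ <;>
    filter_upwards [self_mem_nhdsWithin] with h (hh : h ≠ 0)
  · rw [smul_sub, inv_smul_smul₀ (pow_ne_zero d hh)]
  · rw [smul_eq_mul, pow_sub₀ h hh hd.le, mul_comm]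

theorem stencilMoment_qbsqi {k : ℕ} (hk : k < 3) :
    stencilMoment ![1 / 16, -(5 / 8), 5 / 8, -(1 / 16)] ![-2, -1, 1, 2] k =
      if k = 1 then 1 else 0 := by
  interval_cases k <;> norm_num [stencilMoment, Fin.sum_univ_succ]

theorem qbsqi_derivative_second_order_general {u : ℝ → E} (hu : ContDiffAt ℝ 3 u x) :
    (fun h : ℝ => (1 / h) • ((1 / 16 : ℝ) • u (x - 2 * h) - (5 / 8 : ℝ) • u (x - h)
        + (5 / 8 : ℝ) • u (x + h) - (1 / 16 : ℝ) • u (x + 2 * h)) - deriv u x)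
      =O[𝓝[≠] (0 : ℝ)] fun h : ℝ => h ^ 2 := by
  have approximation := stencilSum_sub_iteratedDeriv_isBigO (n := 3) (d := 1) hu (by norm_num)
    fun k hk => by simpa using stencilMoment_qbsqi hk
  refine approximation.congr_left fun h => ?_
  simp [stencilSum, Fin.sum_univ_four, sub_eq_add_neg]

end Stencil

/-- The quadratic BSQI first-derivative approximation is second-order accurate. -/
theorem qbsqi_derivative_second_order (u : ℝ → ℝ) (hu : ContDiff ℝ 3 u) (x : ℝ) :
    (fun h : ℝ => (1 / h) * ((1 / 16 : ℝ) * u (x - 2 * h) - (5 / 8) * u (x - h)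
        + (5 / 8) * u (x + h) - (1 / 16) * u (x + 2 * h)) - deriv u x)
      =O[𝓝[≠] (0 : ℝ)] fun h : ℝ => h ^ 2 :=
  qbsqi_derivative_second_order_general hu.contDiffAt
end
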